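/- Define the modified Adomian recursion u₀ = f₀(x) + g(x)·t, u₁ = ∫₀ᵗ F[u₀] ds, and uₖ = ∫₀ᵗ (F[u⁽ᵏ⁻¹⁾] − F[u⁽ᵏ⁻²⁾]) ds for k ≥ 2, where u⁽ᵏ⁾ = Σᵢ₌₀ᵏ uᵢ. If F is analytic in its arguments with F[0] = 0, then for each k ≥ 1 there is an analytic function hₖ(x,t) with uₖ(x,t) = tᵏ·hₖ(x,t). Consequently, if u⁽ᵏ⁾ = a₀ + a₁ t + a₂ t² + ⋯ and u⁽ᵏ⁺¹⁾ = b₀ + b₁ t + b₂ t² + ⋯ as power series in t, then aₛ = bₛ for all s ≤ k. -/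

import Mathlib

/-- The jet functional: `F[u](x,t) = Φ(u(x,t), u_x(x,t), …, u_{xⁿ}(x,t))`. -/
noncomputable def adomianF (n : ℕ) (Φ : (Fin (n + 1) → ℝ) → ℝ)
    (v : ℝ → ℝ → ℝ) (x t : ℝ) : ℝ :=
  Φ (fun i => iteratedDeriv (i : ℕ) (fun y => v y t) x)

/-- `u⁽ᵏ⁾ = Σᵢ₌₀ᵏ uᵢ`, the k-th partial sum of the decomposition series. -/
noncomputable def adomianPartialSum (u : ℕ → ℝ → ℝ → ℝ) (k : ℕ) (x t : ℝ) : ℝ :=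
  ∑ i ∈ Finset.range (k + 1), u i x t

section RadialIntegral

variable {E : Type*} [NormedAddCommGroup E] [NormedSpace ℝ E]

open Set Filter Topology

/-- The linear map scaling the second component by `σ`. -/
noncomputable def scaleSnd (E : Type*) [NormedAddCommGroup E] [NormedSpace ℝ E] (σ : ℝ) :
    E × ℝ →L[ℝ] E × ℝ :=
  (ContinuousLinearMap.inl ℝ E ℝ).comp (ContinuousLinearMap.fst ℝ E ℝ) +
    σ • (ContinuousLinearMap.inr ℝ E ℝ).comp (ContinuousLinearMap.snd ℝ E ℝ)

lemma scaleSnd_apply (σ : ℝ) (y : E × ℝ) : scaleSnd E σ y = (y.1, σ * y.2) := by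
  simp [scaleSnd]

lemma continuous_scaleSnd : Continuous (scaleSnd E) := by
  unfold scaleSnd
  fun_prop

lemma norm_scaleSnd_apply_le {σ : ℝ} (h0 : 0 ≤ σ) (h1 : σ ≤ 1) (y : E × ℝ) :
    ‖scaleSnd E σ y‖ ≤ ‖y‖ := by
  rw [scaleSnd_apply, Prod.norm_def, Prod.norm_def]
  refine max_le_max le_rfl ?_
  rw [norm_mul, Real.norm_of_nonneg h0]
  exact mul_le_of_le_one_left (norm_nonneg _) h1

lemma norm_scaleSnd_le {σ : ℝ} (h0 : 0 ≤ σ) (h1 : σ ≤ 1) : ‖scaleSnd E σ‖ ≤ 1 :=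
  ContinuousLinearMap.opNorm_le_bound _ zero_le_one fun y => by
    simpa using norm_scaleSnd_apply_le h0 h1 y

/-- Local analyticity of weighted averages along the second variable. -/
lemma AnalyticAt.integral_pow_mul_scale {f : E × ℝ → ℝ} {z₀ : E} {t₀ : ℝ}
    (hf : AnalyticAt ℝ f (z₀, t₀)) (m : ℕ) :
    AnalyticAt ℝ (fun q : E × ℝ => ∫ σ in (0:ℝ)..1, σ ^ m * f (q.1, t₀ + σ * (q.2 - t₀)))
      (z₀, t₀) := by
  obtain ⟨p, r, hp⟩ := hf
  obtain ⟨ρ, hρ0, hρr⟩ := ENNReal.lt_iff_exists_nnreal_btwn.1 hp.r_pos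
  have hρ0' : 0 < ρ := by exact_mod_cast hρ0
  have hsum : Summable fun k => ‖p k‖ * (ρ : ℝ) ^ k :=
    p.summable_norm_mul_pow (hρr.trans_le hp.r_le)
  let c : (k : ℕ) → ℝ → ContinuousMultilinearMap ℝ (fun _ : Fin k => E × ℝ) ℝ := fun k σ =>
    σ ^ m • (p k).compContinuousLinearMap fun _ => scaleSnd E σ
  have hc (k : ℕ) : Continuous (c k) := by
    have h : Continuous fun σ : ℝ =>
        ContinuousMultilinearMap.compContinuousLinearMapLRight (p k) fun _ => scaleSnd E σ :=
      (ContinuousMultilinearMap.cont _).comp (continuous_pi fun _ => continuous_scaleSnd)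
    exact (continuous_id.pow m).smul h
  have hcn (k : ℕ) {σ : ℝ} (h0 : 0 ≤ σ) (h1 : σ ≤ 1) : ‖c k σ‖ ≤ ‖p k‖ := by
    have h2 : ‖(p k).compContinuousLinearMap fun _ => scaleSnd E σ‖ ≤ ‖p k‖ := by
      refine ((p k).norm_compContinuousLinearMap_le _).trans
        (mul_le_of_le_one_right (norm_nonneg _) ?_)
      exact Finset.prod_le_one (fun _ _ => norm_nonneg _) fun _ _ => norm_scaleSnd_le h0 h1
    rw [norm_smul, norm_pow, Real.norm_of_nonneg h0]
    exact (mul_le_of_le_one_left (norm_nonneg _) (pow_le_one₀ h0 h1)).trans h2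
  let q : FormalMultilinearSeries ℝ (E × ℝ) ℝ := fun k => ∫ σ in (0:ℝ)..1, c k σ
  have hq (k : ℕ) : ‖q k‖ ≤ ‖p k‖ := by
    refine (intervalIntegral.norm_integral_le_of_norm_le_const (C := ‖p k‖) ?_).trans_eq (by simp)
    intro σ hσ
    rw [uIoc_of_le zero_le_one] at hσ
    exact hcn k hσ.1.le hσ.2
  refine ⟨q, ρ, ⟨?_, hρ0, ?_⟩⟩
  · refine q.le_radius_of_summable (hsum.of_nonneg_of_le (fun k => by positivity) fun k => ?_)
    gcongr
    exact hq k
  · intro y hy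
    have hyρ : ‖y‖ ≤ ρ := by
      have : y ∈ Metric.ball (0 : E × ℝ) ρ := by simpa [Metric.eball_coe] using hy
      exact (mem_ball_zero_iff.1 this).le
    have hqy (k : ℕ) : (q k fun _ => y) = ∫ σ in (0:ℝ)..1, c k σ fun _ => y := by
      simp only [q, intervalIntegral.integral_of_le zero_le_one]
      exact ContinuousMultilinearMap.integral_apply
        ((hc k).integrableOn_Ioc) _
    simp only [hqy]
    refine intervalIntegral.hasSum_integral_of_dominated_convergence
      (fun k _ => ‖p k‖ * (ρ : ℝ) ^ k) ?_ ?_ ?_ ?_ ?_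
    · intro k
      exact Continuous.aestronglyMeasurable
        ((ContinuousMultilinearMap.apply ℝ (fun _ : Fin k => E × ℝ) ℝ fun _ => y).continuous.comp
          (hc k))
    · intro k
      refine .of_forall fun σ hσ => ?_
      rw [uIoc_of_le zero_le_one] at hσ
      refine ((c k σ).le_of_opNorm_le (hcn k hσ.1.le hσ.2) _).trans ?_
      simp only [Finset.prod_const, Finset.card_univ, Fintype.card_fin]
      gcongr
    · exact .of_forall fun _ _ => hsum
    · exact intervalIntegrable_const
    · refine .of_forall fun σ hσ => ?_
      rw [uIoc_of_le zero_le_one] at hσ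
      have hmem : scaleSnd E σ y ∈ Metric.eball (0 : E × ℝ) r := by
        rw [Metric.mem_eball, edist_zero_right] at hy ⊢
        refine lt_of_le_of_lt ?_ (hy.trans hρr)
        exact enorm_le_iff_norm_le.2 (norm_scaleSnd_apply_le hσ.1.le hσ.2 y)
      have := (hp.hasSum hmem).mul_left (σ ^ m)
      simpa [c, scaleSnd_apply] using this

/-- The primitive of a jointly analytic function in its second variable is jointly analytic. -/
lemma AnalyticOnNhd.integral_snd {f : E × ℝ → ℝ} (hf : AnalyticOnNhd ℝ f univ) :
    AnalyticOnNhd ℝ (fun q : E × ℝ => ∫ s in (0:ℝ)..q.2, f (q.1, s)) univ := by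
  have hcont : Continuous f := hf.continuous
  have hint (z : E) (a b : ℝ) :
      IntervalIntegrable (fun s => f (z, s)) MeasureTheory.volume a b :=
    (by fun_prop : Continuous fun s => f (z, s)).intervalIntegrable a b
  have hloc (z₀ : E) (t₀ : ℝ) :
      AnalyticAt ℝ (fun q : E × ℝ => ∫ s in t₀..q.2, f (q.1, s)) (z₀, t₀) := by
    have h := (analyticAt_snd.sub (analyticAt_const (v := t₀))).mul
      ((hf (z₀, t₀) (mem_univ _)).integral_pow_mul_scale 0)
    refine h.congr (.of_forall fun q => ?_)
    have := intervalIntegral.smul_integral_comp_add_mul (a := 0) (b := 1)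
      (fun s => f (q.1, s)) (q.2 - t₀) t₀
    simp only [smul_eq_mul, mul_zero, add_zero, mul_one, add_sub_cancel] at this
    simp only [Pi.mul_apply, Pi.sub_apply, pow_zero, one_mul]
    rw [← this]
    simp [mul_comm]
  rintro ⟨z₀, t⟩ -
  let S : Set ℝ := {t | AnalyticAt ℝ (fun q : E × ℝ => ∫ s in (0:ℝ)..q.2, f (q.1, s)) (z₀, t)}
  have key (t₀ : ℝ) : ∀ᶠ t₁ in 𝓝 t₀, ∀ᶠ t₂ in 𝓝 t₀, t₁ ∈ S → t₂ ∈ S := by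
    have hev : ∀ᶠ t in 𝓝 t₀,
        AnalyticAt ℝ (fun q : E × ℝ => ∫ s in t₀..q.2, f (q.1, s)) (z₀, t) :=
      (by fun_prop : Continuous fun t : ℝ => (z₀, t)).continuousAt.eventually
        (hloc z₀ t₀).eventually_analyticAt
    filter_upwards [hev] with t₁ h₁
    filter_upwards [hev] with t₂ h₂ hS
    have hslice : AnalyticAt ℝ (fun q : E × ℝ => (q.1, t₁)) (z₀, t₂) :=
      analyticAt_fst.prod analyticAt_const
    have e₁ := h₁.comp_of_eq hslice rfl
    have e₂ := AnalyticAt.comp_of_eq hS hslice rfl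
    refine ((h₂.sub e₁).add e₂).congr (.of_forall fun q => ?_)
    simp only [Pi.add_apply, Pi.sub_apply, Function.comp_apply]
    rw [intervalIntegral.integral_interval_sub_left (hint _ _ _) (hint _ _ _), add_comm,
      intervalIntegral.integral_add_adjacent_intervals (hint _ _ _) (hint _ _ _)]
  have hclopen : IsClopen S := by
    constructor
    · rw [← isOpen_compl_iff, isOpen_iff_mem_nhds]
      intro t₀ ht₀
      filter_upwards [key t₀] with t₁ h₁ hS
      exact ht₀ (h₁.self_of_nhds hS)
    · rw [isOpen_iff_mem_nhds]
      intro t₀ ht₀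
      filter_upwards [(key t₀).self_of_nhds] with t₂ h₂
      exact h₂ ht₀
  have : S = univ := hclopen.eq_univ ⟨0, hloc z₀ 0⟩
  exact this.symm.subset (mem_univ t)

/-- Weighted averages of a jointly analytic function are jointly analytic. -/
lemma AnalyticOnNhd.integral_pow_mul_scale {f : E × ℝ → ℝ} (hf : AnalyticOnNhd ℝ f univ) (m : ℕ) :
    AnalyticOnNhd ℝ (fun q : E × ℝ => ∫ σ in (0:ℝ)..1, σ ^ m * f (q.1, σ * q.2)) univ := by
  rintro ⟨z, t⟩ -
  rcases eq_or_ne t 0 with rfl | ht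
  · simpa using (hf (z, 0) (mem_univ _)).integral_pow_mul_scale m
  · have hw : AnalyticOnNhd ℝ (fun q : E × ℝ => q.2 ^ m * f q) univ := fun q hq =>
      (analyticAt_snd.pow m).mul (hf q hq)
    have h := ((hw.integral_snd (z, t) (mem_univ _)).div (analyticAt_snd.pow (m + 1))
      (pow_ne_zero _ ht))
    refine h.congr ?_
    have : ∀ᶠ q : E × ℝ in 𝓝 (z, t), q.2 ≠ 0 :=
      continuous_snd.continuousAt.eventually_ne ht
    filter_upwards [this] with q hq
    have e := intervalIntegral.smul_integral_comp_mul_left (a := 0) (b := 1)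
      (fun s => s ^ m * f (q.1, s)) q.2
    simp only [smul_eq_mul, mul_zero, mul_one] at e
    simp only [Pi.div_apply, Pi.pow_apply]
    rw [← e, div_eq_iff (pow_ne_zero _ hq), ← intervalIntegral.integral_const_mul,
      ← intervalIntegral.integral_mul_const]
    congr 1
    ext σ
    rw [mul_comm q.2 σ]
    ring

/-- Integrating `s ^ m` times a jointly analytic function gains a factor of `t`. -/
lemma integral_pow_mul_eq {α : Type*} (f : α × ℝ → ℝ) (m : ℕ) (z : α) (t : ℝ) :
    ∫ s in (0:ℝ)..t, s ^ m * f (z, s) =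
      t ^ (m + 1) * ∫ σ in (0:ℝ)..1, σ ^ m * f (z, σ * t) := by
  have e := intervalIntegral.smul_integral_comp_mul_left (a := 0) (b := 1)
      (fun s => s ^ m * f (z, s)) t
  simp only [smul_eq_mul, mul_zero, mul_one] at e
  rw [← e, ← intervalIntegral.integral_const_mul, ← intervalIntegral.integral_const_mul]
  congr 1
  ext σ
  rw [mul_comm t σ]
  ring

/-- Hadamard's lemma in the analytic category. -/
lemma AnalyticOnNhd.exists_sub_eq_mul {f : E × ℝ → ℝ} (hf : AnalyticOnNhd ℝ f univ) :
    ∃ K : E × ℝ → ℝ, AnalyticOnNhd ℝ K univ ∧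
      ∀ z t, f (z, t) - f (z, 0) = t * K (z, t) := by
  let f' : E × ℝ → ℝ := fun q => fderiv ℝ f q (0, 1)
  have hf' : AnalyticOnNhd ℝ f' univ := fun q hq =>
    (ContinuousLinearMap.apply ℝ ℝ ((0, 1) : E × ℝ)).analyticAt _ |>.comp (hf.fderiv q hq)
  refine ⟨_, hf'.integral_pow_mul_scale 0, fun z t => ?_⟩
  have := integral_pow_mul_eq f' 0 z t
  rw [zero_add, pow_one] at this
  rw [← this]
  simp only [pow_zero, one_mul]
  symm
  have hc : Continuous f' := hf'.continuous
  refine intervalIntegral.integral_eq_sub_of_hasDerivAt (f := fun s => f (z, s)) (fun s _ => ?_)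
    ((by fun_prop : Continuous fun s => f' (z, s)).intervalIntegrable _ _)
  exact (hf (z, s) (mem_univ _)).differentiableAt.hasFDerivAt.comp_hasDerivAt s
    ((hasDerivAt_const s z).prodMk (hasDerivAt_id s))

/-- If `Φ` is analytic, then `Φ (A + τ • B) - Φ A` is `τ` times an analytic function. -/
lemma AnalyticOnNhd.exists_add_smul_sub_eq_mul {Φ : E → ℝ} (hΦ : AnalyticOnNhd ℝ Φ univ) :
    ∃ K : (E × E) × ℝ → ℝ, AnalyticOnNhd ℝ K univ ∧
      ∀ A B τ, Φ (A + τ • B) - Φ A = τ * K ((A, B), τ) := by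
  have hf : AnalyticOnNhd ℝ (fun q : (E × E) × ℝ => Φ (q.1.1 + q.2 • q.1.2)) univ := fun q _ =>
    (hΦ _ (mem_univ _)).comp_of_eq (f := fun q : (E × E) × ℝ => q.1.1 + q.2 • q.1.2)
      ((analyticAt_fst.comp analyticAt_fst).add
        (analyticAt_snd.smul (analyticAt_snd.comp analyticAt_fst))) rfl
  obtain ⟨K, hK, h⟩ := hf.exists_sub_eq_mul
  exact ⟨K, hK, fun A B τ => by simpa using h (A, B) τ⟩

end RadialIntegral

section Jets

open Set

/-- Partial derivatives in the first variable preserve joint analyticity. -/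
lemma AnalyticOnNhd.iteratedDeriv_fst {v : ℝ → ℝ → ℝ}
    (hv : AnalyticOnNhd ℝ (fun p : ℝ × ℝ => v p.1 p.2) univ) (i : ℕ) :
    AnalyticOnNhd ℝ (fun p : ℝ × ℝ => iteratedDeriv i (fun y => v y p.2) p.1) univ := by
  induction i with
  | zero => simpa using hv
  | succ i ih =>
    set w : ℝ × ℝ → ℝ := fun p => iteratedDeriv i (fun y => v y p.2) p.1
    have h : AnalyticOnNhd ℝ (fun p : ℝ × ℝ => fderiv ℝ w p (1, 0)) univ := fun q hq =>
      (ContinuousLinearMap.apply ℝ ℝ ((1, 0) : ℝ × ℝ)).analyticAt _ |>.comp (ih.fderiv q hq)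
    convert h using 2 with p
    rw [iteratedDeriv_succ]
    exact ((ih p (mem_univ _)).differentiableAt.hasFDerivAt.comp_hasDerivAt p.1
      ((hasDerivAt_id p.1).prodMk (hasDerivAt_const p.1 p.2))).deriv

/-- The vector of partial derivatives of orders `0, …, n` in the first variable is jointly
analytic. -/
lemma AnalyticOnNhd.jet_fst {v : ℝ → ℝ → ℝ}
    (hv : AnalyticOnNhd ℝ (fun p : ℝ × ℝ => v p.1 p.2) univ) (n : ℕ) :
    AnalyticOnNhd ℝ (fun (p : ℝ × ℝ) (i : Fin (n + 1)) =>
      iteratedDeriv (i : ℕ) (fun y => v y p.2) p.1) univ :=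
  AnalyticOnNhd.pi fun i => hv.iteratedDeriv_fst i

lemma AnalyticOnNhd.slice_fst {v : ℝ → ℝ → ℝ}
    (hv : AnalyticOnNhd ℝ (fun p : ℝ × ℝ => v p.1 p.2) univ) (t : ℝ) :
    AnalyticOnNhd ℝ (fun y => v y t) univ := fun y _ =>
  (hv (y, t) (mem_univ _)).comp_of_eq (analyticAt_id.prod analyticAt_const) rfl

lemma AnalyticOnNhd.slice_snd {v : ℝ → ℝ → ℝ}
    (hv : AnalyticOnNhd ℝ (fun p : ℝ × ℝ => v p.1 p.2) univ) (x : ℝ) :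
    AnalyticOnNhd ℝ (fun t => v x t) univ := fun t _ =>
  (hv (x, t) (mem_univ _)).comp_of_eq (analyticAt_const.prod analyticAt_id) rfl

/-- The jet functional of an analytic `Φ` preserves joint analyticity. -/
lemma analyticOnNhd_adomianF {n : ℕ} {Φ : (Fin (n + 1) → ℝ) → ℝ}
    (hΦ : AnalyticOnNhd ℝ Φ univ) {v : ℝ → ℝ → ℝ}
    (hv : AnalyticOnNhd ℝ (fun p : ℝ × ℝ => v p.1 p.2) univ) :
    AnalyticOnNhd ℝ (fun p : ℝ × ℝ => adomianF n Φ v p.1 p.2) univ := fun p hp =>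
  (hΦ _ (mem_univ _)).comp (hv.jet_fst n p hp)

/-- Perturbing the argument of the jet functional by `t ^ k * h` changes it by `t ^ k` times an
analytic function. -/
lemma AnalyticOnNhd.exists_adomianF_sub_eq {n : ℕ} {Φ : (Fin (n + 1) → ℝ) → ℝ}
    (hΦ : AnalyticOnNhd ℝ Φ univ) {v h : ℝ → ℝ → ℝ}
    (hv : AnalyticOnNhd ℝ (fun p : ℝ × ℝ => v p.1 p.2) univ)
    (hh : AnalyticOnNhd ℝ (fun p : ℝ × ℝ => h p.1 p.2) univ) (k : ℕ) :
    ∃ w : ℝ × ℝ → ℝ, AnalyticOnNhd ℝ w univ ∧ ∀ x t,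
      adomianF n Φ (fun x t => v x t + t ^ k * h x t) x t - adomianF n Φ v x t =
        t ^ k * w (x, t) := by
  obtain ⟨K, hK, hKeq⟩ := hΦ.exists_add_smul_sub_eq_mul
  refine ⟨_, fun p hp => (hK _ (mem_univ _)).comp
    (((hv.jet_fst n p hp).prod (hh.jet_fst n p hp)).prod (analyticAt_snd.pow k)), fun x t => ?_⟩
  have hjet : (fun i : Fin (n + 1) =>
        iteratedDeriv (i : ℕ) (fun y => v y t + t ^ k * h y t) x) =
      (fun i : Fin (n + 1) => iteratedDeriv (i : ℕ) (fun y => v y t) x) +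
        t ^ k • fun i : Fin (n + 1) => iteratedDeriv (i : ℕ) (fun y => h y t) x := by
    ext i
    have hv' := hv.slice_fst t x (mem_univ _)
    have hh' := hh.slice_fst t x (mem_univ _)
    rw [iteratedDeriv_fun_add hv'.contDiffAt (contDiffAt_const.mul hh'.contDiffAt),
      iteratedDeriv_const_mul_field]
    rfl
  simp only [adomianF, hjet]
  exact hKeq _ _ _

/-- The derivatives of order at most `k` of `t ^ (k + 1) * h t` vanish at `0`. -/
lemma iteratedDeriv_pow_succ_mul_eq_zero {h : ℝ → ℝ} (hh : AnalyticAt ℝ h 0) {k s : ℕ}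
    (hs : s ≤ k) : iteratedDeriv s (fun t => t ^ (k + 1) * h t) 0 = 0 := by
  have hf : AnalyticAt ℝ (fun t => t ^ (k + 1) * h t) 0 := (analyticAt_id.pow _).mul hh
  refine (natCast_le_analyticOrderAt_iff_iteratedDeriv_eq_zero hf).1
    ((natCast_le_analyticOrderAt hf).2 ⟨h, hh, .of_forall fun t => ?_⟩) s (Nat.lt_succ_of_le hs)
  simp

end Jets

/-- Lemma 1: for the modified Adomian recursion
`u₀ = f₀(x) + g(x)·t`, `u₁ = ∫₀ᵗ F[u₀] ds`, `uₖ = ∫₀ᵗ (F[u⁽ᵏ⁻¹⁾] − F[u⁽ᵏ⁻²⁾]) ds` (k ≥ 2),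
with `F` analytic in its jet arguments and `F[0] = 0`, each `uₖ` (k ≥ 1) has the form
`tᵏ·hₖ(x,t)` with `hₖ` analytic; consequently the power-series coefficients in `t` of
`u⁽ᵏ⁾` and `u⁽ᵏ⁺¹⁾` agree up to order `k`. -/
theorem adomian_modified_homogeneity
    (n : ℕ) (Φ : (Fin (n + 1) → ℝ) → ℝ)
    (hΦ : AnalyticOnNhd ℝ Φ Set.univ) (hΦ0 : Φ 0 = 0)
    (f₀ g : ℝ → ℝ)
    (hf₀ : AnalyticOnNhd ℝ f₀ Set.univ) (hg : AnalyticOnNhd ℝ g Set.univ)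
    (u : ℕ → ℝ → ℝ → ℝ)
    (hu0 : ∀ x t : ℝ, u 0 x t = f₀ x + g x * t)
    (hu1 : ∀ x t : ℝ, u 1 x t = ∫ s in (0:ℝ)..t, adomianF n Φ (u 0) x s)
    (huk : ∀ k, 2 ≤ k → ∀ x t : ℝ, u k x t =
      ∫ s in (0:ℝ)..t,
        (adomianF n Φ (adomianPartialSum u (k - 1)) x s -
          adomianF n Φ (adomianPartialSum u (k - 2)) x s)) :
    (∀ k, 1 ≤ k → ∃ h : ℝ → ℝ → ℝ,
      AnalyticOnNhd ℝ (fun p : ℝ × ℝ => h p.1 p.2) Set.univ ∧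
        ∀ x t : ℝ, u k x t = t ^ k * h x t) ∧
    ∀ k s : ℕ, s ≤ k → ∀ x : ℝ,
      iteratedDeriv s (fun t => adomianPartialSum u k x t) 0 =
        iteratedDeriv s (fun t => adomianPartialSum u (k + 1) x t) 0 := by
  have hsum (k : ℕ) (x t : ℝ) :
      adomianPartialSum u (k + 1) x t = adomianPartialSum u k x t + u (k + 1) x t :=
    Finset.sum_range_succ _ _
  have factor (k : ℕ) : ∃ h : ℝ → ℝ → ℝ,
      AnalyticOnNhd ℝ (fun p : ℝ × ℝ => h p.1 p.2) Set.univ ∧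
        ∀ x t : ℝ, u k x t = t ^ k * h x t := by
    induction k using Nat.strong_induction_on with
    | _ k ih =>
      have hu (i : ℕ) (hi : i < k) : AnalyticOnNhd ℝ (fun p : ℝ × ℝ => u i p.1 p.2) Set.univ := by
        obtain ⟨h, hh, he⟩ := ih i hi
        simp only [he]
        exact fun p hp => (analyticAt_snd.pow i).mul (hh p hp)
      match k with
      | 0 =>
        refine ⟨u 0, ?_, by simp⟩
        simp only [hu0]
        intro p _
        exact ((hf₀ _ (Set.mem_univ _)).comp analyticAt_fst).add
          (((hg _ (Set.mem_univ _)).comp analyticAt_fst).mul analyticAt_snd)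
      | 1 =>
        refine ⟨fun x t => ∫ σ in (0:ℝ)..1, σ ^ 0 * adomianF n Φ (u 0) x (σ * t),
          (analyticOnNhd_adomianF hΦ (hu 0 one_pos)).integral_pow_mul_scale 0, fun x t => ?_⟩
        rw [hu1]
        simp
      | k + 2 =>
        obtain ⟨h, hh, he⟩ := ih (k + 1) (by lia)
        have hS : AnalyticOnNhd ℝ (fun p : ℝ × ℝ => adomianPartialSum u k p.1 p.2) Set.univ :=
          Finset.analyticOnNhd_fun_sum _ fun i hi => hu i (by
            have := Finset.mem_range.1 hi
            lia)
        obtain ⟨w, hw, hweq⟩ := hΦ.exists_adomianF_sub_eq hS hh (k + 1)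
        have hS' : adomianPartialSum u (k + 1) =
            fun x t => adomianPartialSum u k x t + t ^ (k + 1) * h x t := by
          ext x t
          rw [hsum, he]
        refine ⟨fun x t => ∫ σ in (0:ℝ)..1, σ ^ (k + 1) * w (x, σ * t),
          hw.integral_pow_mul_scale (k + 1), fun x t => ?_⟩
        rw [huk _ (by lia), ← integral_pow_mul_eq w (k + 1) x t]
        refine intervalIntegral.integral_congr fun s _ => ?_
        simp only [Nat.add_sub_cancel, show k + 2 - 1 = k + 1 from rfl, hS']
        exact hweq x s
  refine ⟨fun k _ => factor k, fun k s hs x => ?_⟩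
  have hu (i : ℕ) : AnalyticOnNhd ℝ (fun t => u i x t) Set.univ := by
    obtain ⟨h, hh, he⟩ := factor i
    simp only [he]
    exact fun t ht => (analyticAt_id.pow i).mul (hh.slice_snd x t ht)
  have hS : AnalyticAt ℝ (fun t => adomianPartialSum u k x t) 0 :=
    Finset.analyticAt_fun_sum _ fun i _ => hu i 0 (Set.mem_univ _)
  simp only [hsum]
  rw [iteratedDeriv_fun_add hS.contDiffAt (hu (k + 1) 0 (Set.mem_univ _)).contDiffAt]
  obtain ⟨h, hh, he⟩ := factor (k + 1)
  simp only [he]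
  rw [iteratedDeriv_pow_succ_mul_eq_zero (hh.slice_snd x 0 (Set.mem_univ _)) hs, add_zero]
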